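/- Let M = p^{n_1} q^{n_2} with p, q distinct primes, and let A : ℤ_M → ℕ be a multiset with positive total mass. Suppose that Φ_{p^{m_1}}(X) ⋯ Φ_{p^{m_r}}(X) · Φ_{p^α q^β}(X) · Φ_{q^γ}(X) divides A(X), where 1 ≤ α < m_1 < ⋯ < m_r ≤ n_1, 1 ≤ β ≤ n_2, 1 ≤ γ ≤ n_2, and β ≠ γ. Then |A| ≥ p^r · q · min(p, q). -/

import Mathlib

open Polynomial

/-- Mask polynomial of a multiset (weight function) on `ZMod M`:
`A(X) = ∑_{x ∈ ℤ_M} w(x) · X^{x.val}`. -/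
noncomputable def wmaskPoly (M : ℕ) (w : ZMod M → ℕ) : Polynomial ℤ :=
  ∑ i ∈ Finset.range M, C ((w (i : ZMod M)) : ℤ) * X ^ i

/-- Total mass `∑_x w(x)` of a multiset on `ZMod M`. -/
def wmass (M : ℕ) (w : ZMod M → ℕ) : ℕ :=
  ∑ i ∈ Finset.range M, w (i : ZMod M)

/-!
Let `P = p ^ r` be the value at `1` of `∏ᵢ Φ_{p ^ mᵢ}` and write `A` as this product times `B`.
Because `α < mᵢ`, the product is a polynomial in `X ^ p ^ α`, so the sum of the coefficients of `A`
over a residue class mod `p ^ α` is `P` times that of `B`; in particular the class sums of `B` are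
nonnegative, although `B` may have negative coefficients. Modulo `q` the factor `Φ_{p ^ α q ^ β}` is
a power of `Φ_{p ^ α}`, so the class sums of `B` over the `p` classes mod `p ^ α` inside a fixed
class mod `p ^ (α - 1)` agree mod `q`. Adding up the minima of these `p`-tuples gives `s ≥ 0` with
`p s ≤ B(1)` and `p s ≡ B(1) ≡ 0 (mod q)`.

* If `s > 0`, then `s ≥ q` and `B(1) ≥ p q`.
* If `s = 0`, then `A` vanishes on some class mod `p ^ α` inside every class mod `p ^ (α - 1)`. The
  divisor `Φ_{p ^ α q ^ β}` makes a suitable multiple of `A` periodic along these smaller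
  classes, and the periodicity spreads the zeros everywhere. This forces `Φ_{q ^ β} ∣ A`, hence
  `Φ_{q ^ β} Φ_{q ^ γ} ∣ B` and `B(1) ≥ q ^ 2`.
-/

section Arithmetic

lemma exists_modEq_and_modEq {k l m : ℕ} (hkl : k.Coprime l) {x y : ℤ} (hxy : x ≡ y [ZMOD m]) :
    ∃ z, z ≡ x [ZMOD (m * k : ℕ)] ∧ z ≡ y [ZMOD (m * l : ℕ)] := by
  obtain ⟨s, t, hst⟩ := Nat.isCoprime_iff_coprime.2 hkl
  obtain ⟨e, he⟩ := hxy.dvd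
  refine ⟨x + m * k * (s * e), ?_, ?_⟩
  · simp [Int.modEq_iff_dvd]
  · rw [Int.modEq_iff_dvd]
    refine ⟨t * e, ?_⟩
    push_cast
    linear_combination he - m * e * hst

theorem card_mul_le_sum_or_exists_eq_zero {ι κ : Type*} [Fintype ι] [Fintype κ] [Nonempty κ]
    {q : ℕ} (hq : (Fintype.card κ).Coprime q) {f : ι → κ → ℤ} (hf : ∀ i j, 0 ≤ f i j)
    (hmod : ∀ i j k, f i j ≡ f i k [ZMOD q]) (hsum : (q : ℤ) ∣ ∑ i, ∑ j, f i j) :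
    Fintype.card κ * q ≤ ∑ i, ∑ j, f i j ∨ ∀ i, ∃ j, f i j = 0 := by
  choose J hJ using fun i => Finite.exists_min (f i)
  set s := ∑ i, f i (J i) with hs
  have hcard : Fintype.card κ * s = ∑ i, ∑ _j : κ, f i (J i) := by
    simp [hs, Finset.mul_sum]
  have hle : Fintype.card κ * s ≤ ∑ i, ∑ j, f i j :=
    hcard ▸ Finset.sum_le_sum fun i _ => Finset.sum_le_sum fun j _ => hJ i j
  have hqs : (q : ℤ) ∣ s := by
    have hmul : (q : ℤ) ∣ Fintype.card κ * s := by
      rw [hcard, ← dvd_sub_right hsum, ← Finset.sum_sub_distrib]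
      refine Finset.dvd_sum fun i _ => ?_
      rw [← Finset.sum_sub_distrib]
      exact Finset.dvd_sum fun j _ => (hmod i (J i) j).dvd
    exact (Nat.isCoprime_iff_coprime.2 hq).symm.dvd_of_dvd_mul_left hmul
  have hs_nonneg : 0 ≤ s := Finset.sum_nonneg fun i _ => hf i (J i)
  rcases hs_nonneg.eq_or_lt with hs_zero | hs_pos
  · right
    have hall := (Finset.sum_eq_zero_iff_of_nonneg fun i _ => hf i (J i)).1 hs_zero.symm
    exact fun i => ⟨J i, hall i (Finset.mem_univ i)⟩
  · left
    exact (mul_le_mul_of_nonneg_left (Int.le_of_dvd hs_pos hqs) (Nat.cast_nonneg _)).trans hle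

end Arithmetic

section ClassSum

variable {R : Type*} [Semiring R] {n : ℕ} {c d : ℤ} {F : R[X]}

/-- The sum of the coefficients of a polynomial over all indices `i ≡ c (mod n)`, that is, the
coefficient of `X ^ c` after reduction modulo `X ^ n - 1`. The class is given by an integer
representative, so that it can be shifted down without truncation. -/
noncomputable def classSum (n : ℕ) (c : ℤ) : R[X] →ₗ[R] R :=
  lsum fun i => if (i : ℤ) ≡ c [ZMOD n] then LinearMap.id else 0

lemma classSum_monomial (n : ℕ) (c : ℤ) (i : ℕ) (a : R) :
    classSum n c (monomial i a) = if (i : ℤ) ≡ c [ZMOD n] then a else 0 := by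
  rw [classSum, lsum_apply, sum_monomial_index _ _ (LinearMap.map_zero _)]
  split_ifs <;> rfl

lemma classSum_eq_sum (n : ℕ) (c : ℤ) (F : R[X]) :
    classSum n c F = ∑ i ∈ F.support, if (i : ℤ) ≡ c [ZMOD n] then F.coeff i else 0 := by
  rw [classSum, lsum_apply, sum_def]
  exact Finset.sum_congr rfl fun i _ => by split_ifs <;> rfl

lemma classSum_eq_zero (h : ∀ i : ℕ, (i : ℤ) ≡ c [ZMOD n] → F.coeff i = 0) :
    classSum n c F = 0 := by
  rw [classSum_eq_sum]
  exact Finset.sum_eq_zero fun i _ => ite_eq_right_iff.2 (h i)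

lemma classSum_eq_coeff (hF : F.degree < n) {i : ℕ} (hi : i < n) :
    classSum n i F = F.coeff i := by
  have hclass {j : ℕ} (hj : j ∈ F.support) : (j : ℤ) ≡ i [ZMOD n] ↔ j = i := by
    have hjn : j < n := Nat.cast_lt.1 ((le_degree_of_mem_supp j hj).trans_lt hF)
    rw [Int.natCast_modEq_iff, Nat.ModEq, Nat.mod_eq_of_lt hjn, Nat.mod_eq_of_lt hi]
  rw [classSum_eq_sum, Finset.sum_congr rfl fun j hj => if_congr (hclass hj) rfl rfl]
  simp [eq_comm]

lemma classSum_congr (h : c ≡ d [ZMOD n]) (F : R[X]) : classSum n c F = classSum n d F := by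
  rw [classSum_eq_sum, classSum_eq_sum]
  exact Finset.sum_congr rfl fun i _ => if_congr ⟨(·.trans h), (·.trans h.symm)⟩ rfl rfl

lemma classSum_X_pow_mul (n : ℕ) (c : ℤ) (k : ℕ) (F : R[X]) :
    classSum n c (X ^ k * F) = classSum n (c - k) F := by
  induction F using Polynomial.induction_on' with
  | add F G hF hG => rw [mul_add, map_add, map_add, hF, hG]
  | monomial i a =>
    have hshift : ((i + k : ℕ) : ℤ) ≡ c [ZMOD n] ↔ (i : ℤ) ≡ c - k [ZMOD n] := by
      simp only [Int.modEq_iff_dvd, Nat.cast_add, sub_sub, add_comm]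
    simp only [X_pow_mul_monomial, classSum_monomial, hshift]

lemma classSum_map {S : Type*} [Semiring S] (f : R →+* S) (n : ℕ) (c : ℤ) (F : R[X]) :
    classSum n c (F.map f) = f (classSum n c F) := by
  induction F using Polynomial.induction_on' with
  | add F G hF hG => simp only [Polynomial.map_add, map_add, hF, hG]
  | monomial i a => simp only [map_monomial, classSum_monomial, apply_ite f, map_zero]

lemma sum_classSum [NeZero n] (F : R[X]) : ∑ c : Fin n, classSum n c F = F.eval 1 := by
  induction F using Polynomial.induction_on' with
  | add F G hF hG => simp only [map_add, Finset.sum_add_distrib, hF, hG, eval_add]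
  | monomial i a =>
    have hclass (c : Fin n) : (i : ℤ) ≡ (c : ℕ) [ZMOD n] ↔ Fin.ofNat n i = c := by
      rw [Int.natCast_modEq_iff, Nat.ModEq, Nat.mod_eq_of_lt c.2, Fin.ext_iff, Fin.val_ofNat]
    simp [classSum_monomial, hclass]

lemma sum_sum_classSum {k l : ℕ} [NeZero k] [NeZero l] (F : R[X]) :
    ∑ x : Fin k, ∑ j : Fin l, classSum (l * k) (x + k * j) F = F.eval 1 := by
  rw [← sum_classSum (n := l * k), ← finProdFinEquiv.sum_comp, Fintype.sum_prod_type_right]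
  simp [finProdFinEquiv]

section Order

variable [PartialOrder R] [IsOrderedAddMonoid R]

lemma classSum_nonneg (hF : ∀ i, 0 ≤ F.coeff i) (n : ℕ) (c : ℤ) : 0 ≤ classSum n c F := by
  rw [classSum_eq_sum]
  exact Finset.sum_nonneg fun i _ => ite_nonneg (hF i) le_rfl

lemma coeff_eq_zero_of_classSum_eq_zero (hF : ∀ i, 0 ≤ F.coeff i) (h : classSum n c F = 0)
    {i : ℕ} (hi : (i : ℤ) ≡ c [ZMOD n]) : F.coeff i = 0 := by
  by_contra hne
  rw [classSum_eq_sum, Finset.sum_eq_zero_iff_of_nonneg fun j _ => ite_nonneg (hF j) le_rfl] at h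
  exact hne (by simpa only [if_pos hi] using h i (mem_support_iff.2 hne))

end Order

end ClassSum

section Expand

variable {R : Type*} [CommSemiring R] {n k : ℕ} {c : ℤ}

lemma classSum_expand_mul (n : ℕ) (c : ℤ) (k : ℕ) (G F : R[X]) :
    classSum n c (expand R k G * F) = G.sum fun j r => r * classSum n (c - k * j) F := by
  induction G using Polynomial.induction_on' with
  | add G H hG hH =>
    rw [map_add, add_mul, map_add, hG, hH, sum_add_index] <;> simp [add_mul]
  | monomial j r =>
    rw [expand_monomial, ← C_mul_X_pow_eq_monomial, mul_assoc, ← smul_eq_C_mul, map_smul,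
      classSum_X_pow_mul, smul_eq_mul, Nat.cast_mul, mul_comm (j : ℤ),
      sum_monomial_index _ (fun j r => r * classSum n (c - k * j) F) (zero_mul _)]

lemma classSum_expand_mul_self (n : ℕ) (c : ℤ) (G F : R[X]) :
    classSum n c (expand R n G * F) = G.eval 1 * classSum n c F := by
  have hshift (j : ℕ) : classSum n (c - n * j) F = classSum n c F :=
    classSum_congr (by simp [Int.modEq_iff_dvd]) F
  simp only [classSum_expand_mul, hshift, eval_eq_sum, one_pow, mul_one]
  simp only [Polynomial.sum, Finset.sum_mul]

lemma classSum_expand_mul_eq_zero (hkn : k ∣ n) {F : R[X]}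
    (hF : ∀ i : ℕ, (i : ℤ) ≡ c [ZMOD k] → F.coeff i = 0) (G : R[X]) :
    classSum n c (expand R k G * F) = 0 := by
  rw [classSum_expand_mul]
  refine Finset.sum_eq_zero fun j _ => mul_eq_zero_of_right _ (classSum_eq_zero fun i hi => ?_)
  refine hF i ((hi.of_dvd (Int.natCast_dvd_natCast.2 hkn)).trans ?_)
  simp [Int.modEq_iff_dvd]

end Expand

section Divisibility

variable {R : Type*} [CommRing R] {n k : ℕ}

lemma classSum_eq_zero_of_X_pow_sub_one_dvd {F : R[X]} (h : X ^ n - 1 ∣ F) (c : ℤ) :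
    classSum n c F = 0 := by
  obtain ⟨G, rfl⟩ := h
  have hexpand : (X ^ n - 1 : R[X]) = expand R n (X - 1) := by simp
  rw [hexpand, classSum_expand_mul_self, eval_sub, eval_X, eval_one, sub_self, zero_mul]

theorem X_pow_sub_one_dvd_of_classSum_eq_zero (hn : 0 < n) {F : R[X]}
    (h : ∀ c, classSum n c F = 0) : X ^ n - 1 ∣ F := by
  nontriviality R
  have hmonic : (X ^ n - 1 : R[X]).Monic := monic_X_pow_sub_C 1 hn.ne'
  rw [← modByMonic_eq_zero_iff_dvd hmonic]
  set r := F %ₘ (X ^ n - 1)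
  have hr_class (c : ℤ) : classSum n c r = 0 := by
    rw [← h c, ← modByMonic_add_div F (X ^ n - 1), map_add,
      classSum_eq_zero_of_X_pow_sub_one_dvd (dvd_mul_right _ _), add_zero]
  have hr_deg : r.degree < n := by
    rw [← degree_X_pow_sub_C hn (1 : R), C_1]
    exact degree_modByMonic_lt F hmonic
  ext i
  rcases lt_or_ge i n with hi | hi
  · rw [← classSum_eq_coeff hr_deg hi, hr_class, coeff_zero]
  · exact coeff_eq_zero_of_degree_lt (hr_deg.trans_le (Nat.cast_le.2 hi))

theorem classSum_eq_of_modEq {F : R[X]} (h : X ^ n - 1 ∣ (X ^ k - 1) * F) {x y : ℤ}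
    (hxy : x ≡ y [ZMOD k]) : classSum n x F = classSum n y F := by
  have hperiodic : Function.Periodic (classSum n · F) (k : ℤ) := fun c => by
    have h0 := classSum_eq_zero_of_X_pow_sub_one_dvd h (c + k)
    rw [sub_mul, one_mul, map_sub, classSum_X_pow_mul, add_sub_cancel_right, sub_eq_zero] at h0
    exact h0.symm
  obtain ⟨t, ht⟩ := hxy.dvd
  rw [eq_add_of_sub_eq' ht, mul_comm]
  exact (hperiodic.int_mul t x).symm

end Divisibility

section Cyclotomic

variable {p n : ℕ} (R : Type*) [CommRing R]

lemma expand_prime_pow_cyclotomic_of_dvd (hp : p.Prime) (hpn : p ∣ n) (k : ℕ) :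
    expand R (p ^ k) (cyclotomic n R) = cyclotomic (p ^ k * n) R := by
  induction k with
  | zero => simp
  | succ k ih =>
    rw [pow_succ', ← expand_expand, ih, cyclotomic_expand_eq_cyclotomic hp (hpn.mul_left _),
      mul_comm, ← mul_assoc]

lemma expand_prime_pow_succ_cyclotomic_of_not_dvd (hp : p.Prime) (hpn : ¬ p ∣ n) (k : ℕ) :
    expand R (p ^ (k + 1)) (cyclotomic n R) =
      cyclotomic (p ^ (k + 1) * n) R * expand R (p ^ k) (cyclotomic n R) := by
  rw [pow_succ, ← expand_expand, cyclotomic_expand_eq_cyclotomic_mul hp hpn, map_mul,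
    expand_prime_pow_cyclotomic_of_dvd R hp (dvd_mul_left p n), mul_comm n, mul_assoc]

lemma cyclotomic_dvd_expand_prime_pow (hp : p.Prime) (hpn : ¬ p ∣ n) (k : ℕ) :
    cyclotomic n R ∣ expand R (p ^ k) (cyclotomic n R) := by
  induction k with
  | zero => simp
  | succ k ih =>
    rw [expand_prime_pow_succ_cyclotomic_of_not_dvd R hp hpn]
    exact ih.mul_left _

lemma exists_prod_cyclotomic_prime_pow_eq_expand {ι : Type*} (hp : p.Prime) {s : Finset ι}
    {m : ι → ℕ} {e : ℕ} (hm : ∀ i ∈ s, e < m i) :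
    ∃ G, ∏ i ∈ s, cyclotomic (p ^ m i) R = expand R (p ^ e) G := by
  refine ⟨∏ i ∈ s, cyclotomic (p ^ (m i - e)) R, ?_⟩
  rw [map_prod]
  refine Finset.prod_congr rfl fun i hi => ?_
  have hlt := hm i hi
  rw [expand_prime_pow_cyclotomic_of_dvd R hp (dvd_pow_self p (Nat.sub_ne_zero_of_lt hlt)),
    ← pow_add, Nat.add_sub_cancel' hlt.le]

lemma eval_one_cyclotomic_prime_pow_of_pos (hp : p.Prime) {k : ℕ} (hk : 0 < k) :
    (cyclotomic (p ^ k) R).eval 1 = p := by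
  have := Fact.mk hp
  obtain ⟨l, rfl⟩ := Nat.exists_eq_succ_of_ne_zero hk.ne'
  exact eval_one_cyclotomic_prime_pow l

lemma isRelPrime_cyclotomic {m n : ℕ} (hmn : m ≠ n) :
    IsRelPrime (cyclotomic m ℤ) (cyclotomic n ℤ) := by
  rcases m.eq_zero_or_pos with rfl | hm
  · simpa using isRelPrime_one_left
  rcases n.eq_zero_or_pos with rfl | hn
  · simpa using isRelPrime_one_right
  rw [(cyclotomic.irreducible hm).isRelPrime_iff_not_dvd]
  intro h
  have hassoc := (cyclotomic.irreducible hm).associated_of_dvd (cyclotomic.irreducible hn) h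
  exact hmn (cyclotomic_injective
    (eq_of_monic_of_associated (cyclotomic.monic m ℤ) (cyclotomic.monic n ℤ) hassoc))

end Cyclotomic

section Vanishing

variable {p n : ℕ} {R : Type*} [CommRing R] [IsDomain R]

theorem expand_cyclotomic_dvd_of_coeff_eq_zero (hp : p.Prime) (hpn : ¬ p ∣ n) {a : ℕ} {F : R[X]}
    (hF : cyclotomic (p ^ (a + 1) * n) R ∣ F)
    (hzero : ∀ y : ℤ, ∃ x, x ≡ y [ZMOD (p ^ a : ℕ)] ∧
      ∀ i : ℕ, (i : ℤ) ≡ x [ZMOD (p ^ (a + 1) : ℕ)] → F.coeff i = 0) :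
    expand R (p ^ (a + 1)) (cyclotomic n R) ∣ F := by
  have hn : 0 < n := Nat.pos_of_ne_zero fun h => hpn (h ▸ dvd_zero p)
  have hN : 0 < p ^ (a + 1) * n := Nat.mul_pos (pow_pos hp.pos _) hn
  obtain ⟨L, hL⟩ := cyclotomic.dvd_X_pow_sub_one n R
  have hfactor (k : ℕ) :
      X ^ (k * n) - 1 = expand R k L * expand R k (cyclotomic n R) := by
    rw [← map_mul, mul_comm L, ← hL, map_sub, map_pow, expand_X, map_one, pow_mul]
  have hdvd : X ^ (p ^ (a + 1) * n) - 1 ∣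
      (X ^ (p ^ a * n) - 1) * (expand R (p ^ (a + 1)) L * F) := by
    rw [hfactor, hfactor (p ^ a), expand_prime_pow_succ_cyclotomic_of_not_dvd R hp hpn]
    obtain ⟨G, rfl⟩ := hF
    exact ⟨expand R (p ^ a) L * G, by ring⟩
  have hclass (y : ℤ) :
      classSum (p ^ (a + 1) * n) y (expand R (p ^ (a + 1)) L * F) = 0 := by
    obtain ⟨x, hxy, hx⟩ := hzero y
    obtain ⟨z, hzx, hzy⟩ := exists_modEq_and_modEq ((hp.coprime_iff_not_dvd).2 hpn) hxy
    rw [← classSum_eq_of_modEq hdvd hzy]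
    exact classSum_expand_mul_eq_zero (dvd_mul_right _ _) (fun i hi => hx i (hi.trans hzx)) L
  have hL_ne : expand R (p ^ (a + 1)) L ≠ 0 := by
    refine left_ne_zero_of_mul (b := expand R (p ^ (a + 1)) (cyclotomic n R)) ?_
    rw [← hfactor]
    exact X_pow_sub_C_ne_zero hN 1
  rw [← mul_dvd_mul_iff_left hL_ne, ← hfactor]
  exact X_pow_sub_one_dvd_of_classSum_eq_zero hN hclass

theorem cyclotomic_dvd_of_classSum_eq_zero [PartialOrder R] [IsOrderedAddMonoid R] (hp : p.Prime)
    (hpn : ¬ p ∣ n) {a : ℕ} {F : R[X]} (hF_nonneg : ∀ i, 0 ≤ F.coeff i)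
    (hF : cyclotomic (p ^ (a + 1) * n) R ∣ F)
    (hzero : ∀ y : ℤ, ∃ x, x ≡ y [ZMOD (p ^ a : ℕ)] ∧ classSum (p ^ (a + 1)) x F = 0) :
    cyclotomic n R ∣ F := by
  refine (cyclotomic_dvd_expand_prime_pow R hp hpn (a + 1)).trans
    (expand_cyclotomic_dvd_of_coeff_eq_zero hp hpn hF fun y => ?_)
  obtain ⟨x, hxy, hx⟩ := hzero y
  exact ⟨x, hxy, fun i hi => coeff_eq_zero_of_classSum_eq_zero hF_nonneg hx hi⟩

end Vanishing

section TwoPrimes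

variable {p q a b : ℕ}

theorem classSum_modEq_of_cyclotomic_dvd (hp : p.Prime) (hq : q.Prime) (hpq : p ≠ q)
    (hb : 0 < b) {F : ℤ[X]} (hF : cyclotomic (p ^ (a + 1) * q ^ b) ℤ ∣ F) {x y : ℤ}
    (hxy : x ≡ y [ZMOD (p ^ a : ℕ)]) :
    classSum (p ^ (a + 1)) x F ≡ classSum (p ^ (a + 1)) y F [ZMOD q] := by
  have := Fact.mk hp
  have := Fact.mk hq
  set f := Int.castRingHom (ZMod q)
  have hdvd : cyclotomic (p ^ (a + 1)) (ZMod q) ∣ F.map f := by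
    have hqp : ¬ q ∣ p ^ (a + 1) := fun h =>
      hpq ((Nat.prime_dvd_prime_iff_eq hq hp).1 (hq.dvd_of_dvd_pow h)).symm
    have hexp : q ^ b - q ^ (b - 1) ≠ 0 :=
      Nat.sub_ne_zero_of_lt (Nat.pow_lt_pow_right hq.one_lt (Nat.sub_one_lt hb.ne'))
    have hmap := Polynomial.map_dvd f hF
    rw [map_cyclotomic, mul_comm, cyclotomic_mul_prime_pow_eq _ hqp hb] at hmap
    exact (dvd_pow_self _ hexp).trans hmap
  rw [← ZMod.intCast_eq_intCast_iff]
  change f _ = f _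
  rw [← classSum_map, ← classSum_map]
  refine classSum_eq_of_modEq ?_ hxy
  rw [← cyclotomic_prime_pow_mul_X_pow_sub_one, mul_comm]
  exact mul_dvd_mul_left _ hdvd

theorem mul_le_eval_one_or_cyclotomic_dvd (hp : p.Prime) (hq : q.Prime) (hpq : p ≠ q) (hb : 0 < b)
    {G B : ℤ[X]} (hG : 0 < G.eval 1) (hGB : ∀ i, 0 ≤ (expand ℤ (p ^ (a + 1)) G * B).coeff i)
    (hB : cyclotomic (p ^ (a + 1) * q ^ b) ℤ ∣ B) (hqB : (q : ℤ) ∣ B.eval 1) :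
    (p * q : ℤ) ≤ B.eval 1 ∨ cyclotomic (q ^ b) ℤ ∣ expand ℤ (p ^ (a + 1)) G * B := by
  have : NeZero p := ⟨hp.ne_zero⟩
  have hcop : p.Coprime q := (Nat.coprime_primes hp hq).2 hpq
  have hnonneg (x : ℤ) : 0 ≤ classSum (p ^ (a + 1)) x B := by
    have h := classSum_nonneg hGB (p ^ (a + 1)) x
    rw [classSum_expand_mul_self] at h
    exact nonneg_of_mul_nonneg_right h hG
  have hmod (x : Fin (p ^ a)) (j k : Fin p) : classSum (p ^ (a + 1)) (x + (p ^ a : ℕ) * j) B ≡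
      classSum (p ^ (a + 1)) (x + (p ^ a : ℕ) * k) B [ZMOD q] :=
    classSum_modEq_of_cyclotomic_dvd hp hq hpq hb hB (by simp [Int.modEq_iff_dvd, ← mul_sub])
  have hsum : ∑ x : Fin (p ^ a), ∑ j : Fin p,
      classSum (p ^ (a + 1)) (x + (p ^ a : ℕ) * j) B = B.eval 1 := by
    rw [← sum_sum_classSum (k := p ^ a) (l := p), pow_succ']
  refine (card_mul_le_sum_or_exists_eq_zero (by rwa [Fintype.card_fin]) (fun _ _ => hnonneg _)
    hmod (by rwa [hsum])).imp (fun hle => by rwa [hsum, Fintype.card_fin] at hle) fun hzero => ?_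
  refine cyclotomic_dvd_of_classSum_eq_zero hp (hp.coprime_iff_not_dvd.1 (hcop.pow_right b)) hGB
    (hB.mul_left _) fun y => ?_
  obtain ⟨x, hx_lt, hxy⟩ := Int.existsUnique_equiv_nat y (b := (p ^ a : ℕ))
    (Nat.cast_pos.2 (pow_pos hp.pos a))
  obtain ⟨j, hj⟩ := hzero ⟨x, Nat.cast_lt.1 hx_lt⟩
  refine ⟨x + (p ^ a : ℕ) * j, .trans (by simp [Int.modEq_iff_dvd]) hxy, ?_⟩
  rw [classSum_expand_mul_self, hj, mul_zero]

theorem mul_min_le_eval_one (hp : p.Prime) (hq : q.Prime) (hpq : p ≠ q) {c : ℕ} (hb : 0 < b)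
    (hc : 0 < c) (hbc : b ≠ c) {G B : ℤ[X]} (hG : 0 < G.eval 1) (hB_pos : 0 < B.eval 1)
    (hGB : ∀ i, 0 ≤ (expand ℤ (p ^ (a + 1)) G * B).coeff i)
    (hrel : IsRelPrime (cyclotomic (q ^ b) ℤ) (expand ℤ (p ^ (a + 1)) G))
    (hpqB : cyclotomic (p ^ (a + 1) * q ^ b) ℤ ∣ B) (hqB : cyclotomic (q ^ c) ℤ ∣ B) :
    (q * min p q : ℤ) ≤ B.eval 1 := by
  have hq_dvd : (q : ℤ) ∣ B.eval 1 := by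
    simpa only [eval_one_cyclotomic_prime_pow_of_pos ℤ hq hc] using eval_dvd (x := 1) hqB
  rcases mul_le_eval_one_or_cyclotomic_dvd hp hq hpq hb hG hGB hpqB hq_dvd with hle | hdvd
  · calc (q * min p q : ℤ) ≤ q * p := by gcongr; exact min_le_left _ _
      _ = p * q := mul_comm _ _
      _ ≤ B.eval 1 := hle
  · have hmul : cyclotomic (q ^ b) ℤ * cyclotomic (q ^ c) ℤ ∣ B :=
      (isRelPrime_cyclotomic fun h => hbc (Nat.pow_right_injective hq.two_le h)).mul_dvd
        (hrel.dvd_of_dvd_mul_left hdvd) hqB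
    have hqq : (q * q : ℤ) ∣ B.eval 1 := by
      simpa only [eval_mul, eval_one_cyclotomic_prime_pow_of_pos ℤ hq hb,
        eval_one_cyclotomic_prime_pow_of_pos ℤ hq hc] using eval_dvd (x := 1) hmul
    calc (q * min p q : ℤ) ≤ q * q := by gcongr; exact min_le_right _ _
      _ ≤ B.eval 1 := Int.le_of_dvd hB_pos hqq

end TwoPrimes

theorem mass_ge_three_divisors_general {ι : Type*} {p q : ℕ} (hp : p.Prime) (hq : q.Prime)
    (hpq : p ≠ q) {A : ℤ[X]} (hA : ∀ i, 0 ≤ A.coeff i) (hA_pos : 0 < A.eval 1) {s : Finset ι}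
    {m : ι → ℕ} {α β γ : ℕ} (hα : 0 < α) (hαm : ∀ i ∈ s, α < m i) (hβ : 0 < β) (hγ : 0 < γ)
    (hβγ : β ≠ γ)
    (hdvd : (∏ i ∈ s, cyclotomic (p ^ m i) ℤ) * cyclotomic (p ^ α * q ^ β) ℤ *
      cyclotomic (q ^ γ) ℤ ∣ A) :
    ((p ^ s.card * q * min p q : ℕ) : ℤ) ≤ A.eval 1 := by
  have hG_one : (∏ i ∈ s, cyclotomic (p ^ m i) ℤ).eval 1 = (p : ℤ) ^ s.card := by
    rw [eval_prod]
    exact Finset.prod_eq_pow_card fun i hi =>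
      eval_one_cyclotomic_prime_pow_of_pos ℤ hp (Nat.zero_lt_of_lt (hαm i hi))
  have hrel : IsRelPrime (cyclotomic (q ^ β) ℤ) (∏ i ∈ s, cyclotomic (p ^ m i) ℤ) :=
    IsRelPrime.prod_right fun i _ => isRelPrime_cyclotomic fun h => hpq
      ((Nat.prime_dvd_prime_iff_eq hq hp).1
        (hq.dvd_of_dvd_pow (h ▸ dvd_pow_self q hβ.ne'))).symm
  obtain ⟨a, rfl⟩ := Nat.exists_eq_add_one_of_ne_zero hα.ne'
  obtain ⟨G, hG⟩ := exists_prod_cyclotomic_prime_pow_eq_expand ℤ hp hαm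
  obtain ⟨B, rfl, hpqB, hqB⟩ : ∃ B, A = (∏ i ∈ s, cyclotomic (p ^ m i) ℤ) * B ∧
      cyclotomic (p ^ (a + 1) * q ^ β) ℤ ∣ B ∧ cyclotomic (q ^ γ) ℤ ∣ B := by
    obtain ⟨D, rfl⟩ := hdvd
    exact ⟨cyclotomic (p ^ (a + 1) * q ^ β) ℤ * cyclotomic (q ^ γ) ℤ * D, by ring,
      (dvd_mul_right _ _).mul_right _, (dvd_mul_left _ _).mul_right _⟩
  have hP : (0 : ℤ) < p ^ s.card := pow_pos (Nat.cast_pos.2 hp.pos) _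
  rw [eval_mul, hG_one] at hA_pos ⊢
  rw [hG] at hA hrel
  have hG_eval : G.eval 1 = (p : ℤ) ^ s.card := by
    rw [← hG_one, hG, expand_eval, one_pow]
  have hB := mul_min_le_eval_one hp hq hpq hβ hγ hβγ (hG_eval ▸ hP)
    (pos_of_mul_pos_right hA_pos hP.le) hA hrel hpqB hqB
  rw [Nat.cast_mul, Nat.cast_mul, Nat.cast_pow, mul_assoc]
  exact mul_le_mul_of_nonneg_left hB hP.le

lemma coeff_wmaskPoly_nonneg (M : ℕ) (w : ZMod M → ℕ) (i : ℕ) : 0 ≤ (wmaskPoly M w).coeff i := by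
  simp only [wmaskPoly, finsetSum_coeff, coeff_C_mul_X_pow]
  exact Finset.sum_nonneg fun j _ => ite_nonneg (Nat.cast_nonneg _) le_rfl

lemma eval_one_wmaskPoly (M : ℕ) (w : ZMod M → ℕ) : (wmaskPoly M w).eval 1 = wmass M w := by
  simp [wmaskPoly, wmass, eval_finsetSum]

/-- Proposition 7.4: if `Φ_{p^{m_1}} ⋯ Φ_{p^{m_r}} Φ_{p^α q^β} Φ_{q^γ} ∣ A(X)` with
`1 ≤ α < m_1 < ⋯ < m_r ≤ n_1`, `1 ≤ β, γ ≤ n_2` and `β ≠ γ`, then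
`|A| ≥ p^r · q · min(p,q)`. -/
theorem mass_ge_three_divisors (p q : ℕ) (hp : p.Prime) (hq : q.Prime) (hpq : p ≠ q)
    (n₁ n₂ : ℕ) (hn₁ : 1 ≤ n₁) (hn₂ : 1 ≤ n₂)
    (M : ℕ) (hM : M = p ^ n₁ * q ^ n₂)
    (w : ZMod M → ℕ) (hw : 0 < wmass M w)
    (r : ℕ) (hr : 1 ≤ r) (m : Fin r → ℕ) (hmono : StrictMono m)
    (α β γ : ℕ) (hα : 1 ≤ α) (hαm : ∀ i, α < m i) (hmn : ∀ i, m i ≤ n₁)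
    (hβ1 : 1 ≤ β) (hβn : β ≤ n₂) (hγ1 : 1 ≤ γ) (hγn : γ ≤ n₂) (hβγ : β ≠ γ)
    (hdvd : ((∏ i, cyclotomic (p ^ m i) ℤ) * cyclotomic (p ^ α * q ^ β) ℤ *
        cyclotomic (q ^ γ) ℤ) ∣ wmaskPoly M w) :
    p ^ r * q * min p q ≤ wmass M w := by
  have h := mass_ge_three_divisors_general hp hq hpq (coeff_wmaskPoly_nonneg M w)
    (by rwa [eval_one_wmaskPoly, Nat.cast_pos]) hα (s := .univ) (fun i _ => hαm i) hβ1 hγ1 hβγ hdvd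
  rwa [Finset.card_fin, eval_one_wmaskPoly, Nat.cast_le] at h
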